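/- arXiv:1803.09306 — 2 statements merged into one kernel-verified Lean document; each statement's English description precedes it below -/
import Mathlib

section
/- Let s ≥ 2 be an integer, let f be a homogeneous polynomial of degree s in d variables with rational coefficients, and let D = D(f) be the common denominator of its coefficients. Let q be a positive integer and a₁,…,a_d, A ∈ ℤ with gcd(q, a₁, …, a_d, A) = 1, and suppose f(a₁/q, …, a_d/q) = A/q. Then Δ^s divides D·q^{s−1}, where Δ = gcd(q, a₁, …, a_d); in particular Δ ≤ (D q^{s−1})^{1/s} = O(q^{(s−1)/s}). -/
/-!
The integer form `g = D f` satisfies `g(a) = q ^ s g(a / q) = D q ^ (s - 1) A`. By homogeneity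
`Δ ^ s` divides `g(a)` as soon as `Δ` divides every `aᵢ`, and `Δ ^ s` is coprime to `A`, so it
divides `D q ^ (s - 1)`.
-/

section

open MvPolynomial

variable {σ R : Type*} [CommSemiring R] {s : ℕ}

theorem eval_smul_of_isHomogeneous {g : MvPolynomial σ R}
    (hg : g.IsHomogeneous s) (c : R) (x : σ → R) : eval (c • x) g = c ^ s * eval x g := by
  rw [eval_eq, eval_eq, Finset.mul_sum]
  refine Finset.sum_congr rfl fun m hm => ?_
  have hdeg : ∑ i ∈ m.support, m i = s := (hg.degree_eq_sum_deg_support hm).symm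
  simp only [Pi.smul_apply, smul_eq_mul, mul_pow, Finset.prod_mul_distrib,
    Finset.prod_pow_eq_pow_sum, hdeg]
  ring

theorem pow_dvd_eval_of_isHomogeneous {g : MvPolynomial σ R}
    (hg : g.IsHomogeneous s) {c : R} {x : σ → R} (hc : ∀ i, c ∣ x i) : c ^ s ∣ eval x g := by
  choose y hy using hc
  obtain rfl : x = c • y := funext hy
  exact ⟨eval y g, eval_smul_of_isHomogeneous hg c y⟩

section FieldExtension

variable {K : Type*} [Field K] [Algebra R K] [FaithfulSMul R K]

theorem eval_eq_mul_pow_mul_of_eval_div_eq {f : MvPolynomial σ K} {g : MvPolynomial σ R}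
    (hg : g.IsHomogeneous s) (hs : s ≠ 0) {D q A : R} {a : σ → R}
    (hgf : map (algebraMap R K) g = C (algebraMap R K D) * f) (hq : q ≠ 0)
    (heval : eval (fun i => algebraMap R K (a i) / algebraMap R K q) f =
      algebraMap R K A / algebraMap R K q) :
    eval a g = D * q ^ (s - 1) * A := by
  let ι := algebraMap R K
  have hq' : ι q ≠ 0 := (map_ne_zero_iff ι (FaithfulSMul.algebraMap_injective R K)).mpr hq
  have hscale : ι ∘ a = ι q • fun i => ι (a i) / ι q :=
    funext fun i => (mul_div_cancel₀ (ι (a i)) hq').symm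
  apply FaithfulSMul.algebraMap_injective R K
  calc ι (eval a g) = eval (ι ∘ a) (map ι g) := by rw [eval_map, eval₂_comp]
    _ = ι q ^ s * (ι D * (ι A / ι q)) := by
      rw [hscale, eval_smul_of_isHomogeneous (hg.map ι), hgf, eval_mul, eval_C, heval]
    _ = ι q ^ (s - 1) * ι q * (ι D * (ι A / ι q)) := by rw [pow_sub_one_mul hs]
    _ = ι (D * q ^ (s - 1) * A) := by
      simp only [map_mul, map_pow]
      field_simp

theorem pow_dvd_mul_pow_of_eval_div_eq {f : MvPolynomial σ K} (hf : f.IsHomogeneous s)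
    {D q A Δ : R} {a : σ → R}
    (hD : C (algebraMap R K D) * f ∈ Set.range (map (algebraMap R K)))
    (hq : q ≠ 0) (hΔa : ∀ i, Δ ∣ a i) (hΔA : IsCoprime Δ A)
    (heval : eval (fun i => algebraMap R K (a i) / algebraMap R K q) f =
      algebraMap R K A / algebraMap R K q) :
    Δ ^ s ∣ D * q ^ (s - 1) := by
  obtain rfl | hs := eq_or_ne s 0
  · simp
  obtain ⟨g, hgf⟩ := hD
  have hg : g.IsHomogeneous s :=
    .of_map (FaithfulSMul.algebraMap_injective R K) (hgf ▸ hf.C_mul _)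
  have hdvd : Δ ^ s ∣ D * q ^ (s - 1) * A :=
    eval_eq_mul_pow_mul_of_eval_div_eq hg hs hgf hq heval ▸ pow_dvd_eval_of_isHomogeneous hg hΔa
  exact hΔA.pow_left.dvd_of_dvd_mul_right hdvd

end FieldExtension

theorem C_natCast_mul_mem_range_map_of_den_dvd {f : MvPolynomial σ ℚ} {D : ℕ}
    (hD : ∀ m ∈ f.support, (f.coeff m).den ∣ D) :
    C (algebraMap ℤ ℚ D) * f ∈ Set.range (map (algebraMap ℤ ℚ)) := by
  rw [mem_range_map_iff_coeffs_subset]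
  intro c hc
  obtain ⟨m, hm, rfl⟩ := mem_coeffs_iff.mp hc
  have hmf : m ∈ f.support := by
    rw [mem_support_iff, coeff_C_mul] at hm
    exact mem_support_iff.mpr (right_ne_zero_of_mul hm)
  obtain ⟨k, rfl⟩ := hD m hmf
  refine ⟨k * (f.coeff m).num, ?_⟩
  rw [coeff_C_mul, map_mul, eq_intCast, eq_intCast, eq_intCast, ← Rat.den_mul_eq_num]
  push_cast
  ring

theorem lcm_den_coeff_pos (f : MvPolynomial σ ℚ) :
    0 < f.support.lcm fun m => (f.coeff m).den :=
  Nat.pos_of_ne_zero fun h =>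
    let ⟨m, _, hm⟩ := Finset.lcm_eq_zero_iff.mp h
    (f.coeff m).den_ne_zero hm

theorem le_rpow_one_div_of_pow_dvd {n : ℕ} {N : ℤ} (hs : s ≠ 0) (hN : 0 < N)
    (h : (n : ℤ) ^ s ∣ N) : (n : ℝ) ≤ (N : ℝ) ^ ((1 : ℝ) / s) := by
  have hle : (n : ℝ) ^ s ≤ N := by exact_mod_cast Int.le_of_dvd hN h
  rw [one_div, Real.le_rpow_inv_iff_of_pos (by positivity) (by positivity) (by positivity),
    Real.rpow_natCast]
  exact hle

theorem gcd_bound_lemma_general {f : MvPolynomial σ ℚ} (hs : s ≠ 0) (hf : f.IsHomogeneous s)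
    {D : ℕ} (hD : D = f.support.lcm fun m => (f.coeff m).den) {q : ℤ} (hq : 0 < q)
    {a : σ → ℤ} {A : ℤ} {Δ : ℕ} (hΔa : ∀ i, (Δ : ℤ) ∣ a i) (hΔA : IsCoprime (Δ : ℤ) A)
    (heval : eval (fun i => (a i : ℚ) / (q : ℚ)) f = (A : ℚ) / (q : ℚ)) :
    (Δ : ℤ) ^ s ∣ (D : ℤ) * q ^ (s - 1) ∧
      (Δ : ℝ) ≤ ((D : ℝ) * (q : ℝ) ^ (s - 1)) ^ ((1 : ℝ) / s) := by
  have hden : ∀ m ∈ f.support, (f.coeff m).den ∣ D := fun m hm =>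
    hD ▸ Finset.dvd_lcm (f := fun m => (f.coeff m).den) hm
  have hDpos : 0 < D := hD ▸ lcm_den_coeff_pos f
  have hdvd : (Δ : ℤ) ^ s ∣ (D : ℤ) * q ^ (s - 1) :=
    pow_dvd_mul_pow_of_eval_div_eq hf (C_natCast_mul_mem_range_map_of_den_dvd hden) hq.ne'
      hΔa hΔA heval
  refine ⟨hdvd, ?_⟩
  exact_mod_cast le_rpow_one_div_of_pow_dvd hs (by positivity) hdvd

end

/-- Lemma 2: let `f` be a homogeneous polynomial of degree `s ≥ 2` in `d` variables with
rational coefficients and `D` the common denominator of its coefficients. Suppose `q ≥ 1`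
and `a₁, …, a_d, A` are integers with `gcd(q, a₁, …, a_d, A) = 1` and
`f(a₁/q, …, a_d/q) = A/q`. Then `Δ^s ∣ D q^{s-1}` where `Δ = gcd(q, a₁, …, a_d)`; in
particular `Δ ≤ (D q^{s-1})^{1/s}`. -/
theorem gcd_bound_lemma
    (d s : ℕ) (hs : 2 ≤ s)
    (f : MvPolynomial (Fin d) ℚ) (hhom : f.IsHomogeneous s)
    (D : ℕ) (hD : D = f.support.lcm fun m => (f.coeff m).den)
    (q : ℤ) (hq : 0 < q) (a : Fin d → ℤ) (A : ℤ)
    (hgcd : Int.gcd (Int.gcd q (Finset.univ.gcd a)) A = 1)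
    (heval : MvPolynomial.eval (fun i => (a i : ℚ) / (q : ℚ)) f = (A : ℚ) / (q : ℚ)) :
    ((Int.gcd q (Finset.univ.gcd a) : ℤ)) ^ s ∣ (D : ℤ) * q ^ (s - 1) ∧
    ((Int.gcd q (Finset.univ.gcd a) : ℝ))
      ≤ ((D : ℝ) * (q : ℝ) ^ (s - 1)) ^ ((1 : ℝ) / s) :=
  gcd_bound_lemma_general (by omega) hhom hD hq
    (fun i => (Int.gcd_dvd_right q _).trans (Finset.gcd_dvd (Finset.mem_univ i)))
    (Int.isCoprime_iff_gcd_eq_one.mpr hgcd) heval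
end

section
/- Let s ≥ 2 and d ≥ 1 be integers. Then the equation 1 − x = x · Σ_{k=1}^{d} (x/(s−1))^k has a unique positive real root H_{d,s}; moreover (s−1)/s < H_{d,s} < 1, for fixed s the sequence d ↦ H_{d,s} is strictly decreasing, and H_{d,s} → (s−1)/s as d → ∞. -/
/-!
Writing `F_d x = x · ∑_{k=0}^{d} (x/(s-1))^k`, the equation says `F_d x = 1`. On `[0, ∞)` the
function `F_d` increases at least as fast as the identity, with `F_d 0 = 0`, which gives the unique
root. For fixed `x > 0`, `F_d x` increases with `d`, so the roots decrease; the bound by `1` is the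
comparison with `d = 0`, where the root is `1`. Summing the geometric series at `x = (s-1)/s` gives
`F_d x = 1 - s^{-(d+1)}`, so the root lies above `(s-1)/s`, at distance at most `s^{-(d+1)}`.
-/

open Finset Filter Topology

/-- The function `x ↦ x · ∑_{k=0}^{d} (x/(s-1))^k`; the equation for `H_{d,s}` says that it takes
the value `1`, the term `k = 0` being the `x` on the left-hand side `1 - x`. -/
noncomputable def geomPoly (s : ℝ) (d : ℕ) (x : ℝ) : ℝ :=
  x * ∑ k ∈ range (d + 1), (x / (s - 1)) ^ k

/-- `x` is a positive root of the equation defining `H_{d,s}`, for a real parameter `s` and with the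
sum over `1 ≤ k ≤ d` indexed from `0`. -/
def IsPosRoot (s : ℝ) (d : ℕ) (x : ℝ) : Prop :=
  0 < x ∧ 1 - x = x * ∑ k ∈ range d, (x / (s - 1)) ^ (k + 1)

section geomPoly

variable {s x y : ℝ}

lemma geomPoly_eq_add (s : ℝ) (d : ℕ) (x : ℝ) :
    geomPoly s d x = x + x * ∑ k ∈ range d, (x / (s - 1)) ^ (k + 1) := by
  rw [geomPoly, sum_range_succ', pow_zero]
  ring

lemma geomPoly_zero_right (s : ℝ) (d : ℕ) : geomPoly s d 0 = 0 :=
  zero_mul _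

lemma continuous_geomPoly (s : ℝ) (d : ℕ) : Continuous (geomPoly s d) := by
  unfold geomPoly
  fun_prop

lemma sub_le_geomPoly_sub (hs : 1 < s) (d : ℕ) (hx : 0 ≤ x) (hxy : x ≤ y) :
    y - x ≤ geomPoly s d y - geomPoly s d x := by
  have : 0 < s - 1 := sub_pos.mpr hs
  have : 0 ≤ y := hx.trans hxy
  have higher_terms_le : x * ∑ k ∈ range d, (x / (s - 1)) ^ (k + 1) ≤
      y * ∑ k ∈ range d, (y / (s - 1)) ^ (k + 1) := by
    gcongr
  rw [geomPoly_eq_add, geomPoly_eq_add]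
  linarith

lemma strictMonoOn_geomPoly (hs : 1 < s) (d : ℕ) : StrictMonoOn (geomPoly s d) (Set.Ici 0) :=
  fun _ hx _ _ hxy => sub_pos.mp <|
    (sub_pos.mpr hxy).trans_le (sub_le_geomPoly_sub hs d hx hxy.le)

lemma strictMono_geomPoly_degree (hs : 1 < s) (hx : 0 < x) :
    StrictMono fun d => geomPoly s d x := by
  have hs_pos : 0 < s - 1 := sub_pos.mpr hs
  refine strictMono_nat_of_lt_succ fun d => mul_lt_mul_of_pos_left ?_ hx
  rw [sum_range_succ _ (d + 1)]
  exact lt_add_of_pos_right _ (pow_pos (div_pos hx hs_pos) _)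

lemma geomPoly_sub_one_div_self (hs_zero : s ≠ 0) (hs_one : s ≠ 1) (d : ℕ) :
    geomPoly s d ((s - 1) / s) = 1 - s⁻¹ ^ (d + 1) := by
  have ratio_eq : (s - 1) / s / (s - 1) = s⁻¹ := by
    rw [div_right_comm, div_self (sub_ne_zero.mpr hs_one), one_div]
  have factor_eq : (s - 1) / s = 1 - s⁻¹ := by
    rw [sub_div, div_self hs_zero, one_div]
  rw [geomPoly, ratio_eq, factor_eq, mul_neg_geom_sum]

end geomPoly

section IsPosRoot

variable {s x y : ℝ} {d e : ℕ}

lemma isPosRoot_iff : IsPosRoot s d x ↔ 0 < x ∧ geomPoly s d x = 1 := by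
  rw [IsPosRoot, geomPoly_eq_add, sub_eq_iff_eq_add', eq_comm (a := (1 : ℝ))]

lemma isPosRoot_zero_one (s : ℝ) : IsPosRoot s 0 1 := by
  simp [IsPosRoot]

lemma existsUnique_isPosRoot (hs : 1 < s) (d : ℕ) : ∃! x, IsPosRoot s d x := by
  have one_le : 1 ≤ geomPoly s d 1 := by
    simpa [geomPoly_zero_right] using sub_le_geomPoly_sub hs d le_rfl zero_le_one
  obtain ⟨x, ⟨hx_nonneg, -⟩, hx⟩ := intermediate_value_Icc zero_le_one
    (continuous_geomPoly s d).continuousOn ⟨(geomPoly_zero_right s d).trans_le zero_le_one, one_le⟩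
  have hx_ne : x ≠ 0 := by
    rintro rfl
    exact zero_ne_one ((geomPoly_zero_right s d).symm.trans hx)
  refine ⟨x, isPosRoot_iff.mpr ⟨hx_nonneg.lt_of_ne' hx_ne, hx⟩, fun y hy => ?_⟩
  obtain ⟨hy_pos, hy⟩ := isPosRoot_iff.mp hy
  exact (strictMonoOn_geomPoly hs d).injOn hy_pos.le hx_nonneg (hy.trans hx.symm)

lemma IsPosRoot.lt_of_degree_lt (hs : 1 < s) (hx : IsPosRoot s d x) (hy : IsPosRoot s e y)
    (hde : d < e) : y < x := by
  obtain ⟨hx_pos, hx⟩ := isPosRoot_iff.mp hx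
  obtain ⟨hy_pos, hy⟩ := isPosRoot_iff.mp hy
  refine ((strictMonoOn_geomPoly hs e).lt_iff_lt hy_pos.le hx_pos.le).mp ?_
  calc geomPoly s e y = geomPoly s d x := hy.trans hx.symm
    _ < geomPoly s e x := strictMono_geomPoly_degree hs hx_pos hde

lemma IsPosRoot.lt_one (hs : 1 < s) (hd : 1 ≤ d) (hx : IsPosRoot s d x) : x < 1 :=
  (isPosRoot_zero_one s).lt_of_degree_lt hs hx hd

lemma IsPosRoot.sub_one_div_self_lt (hs : 1 < s) (hx : IsPosRoot s d x) : (s - 1) / s < x := by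
  obtain ⟨hx_pos, hx⟩ := isPosRoot_iff.mp hx
  have hs_pos : 0 < s := zero_lt_one.trans hs
  have limit_nonneg : 0 ≤ (s - 1) / s := div_nonneg (sub_nonneg.mpr hs.le) hs_pos.le
  refine ((strictMonoOn_geomPoly hs d).lt_iff_lt limit_nonneg hx_pos.le).mp ?_
  rw [geomPoly_sub_one_div_self hs_pos.ne' hs.ne', hx]
  exact sub_lt_self 1 (by positivity)

lemma IsPosRoot.le_add_inv_pow (hs : 1 < s) (hx : IsPosRoot s d x) :
    x ≤ (s - 1) / s + s⁻¹ ^ (d + 1) := by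
  have hs_pos : 0 < s := zero_lt_one.trans hs
  have limit_nonneg : 0 ≤ (s - 1) / s := div_nonneg (sub_nonneg.mpr hs.le) hs_pos.le
  have gap_le := sub_le_geomPoly_sub hs d limit_nonneg (hx.sub_one_div_self_lt hs).le
  rw [(isPosRoot_iff.mp hx).2, geomPoly_sub_one_div_self hs_pos.ne' hs.ne'] at gap_le
  linarith

lemma tendsto_of_eventually_isPosRoot (hs : 1 < s) {H : ℕ → ℝ}
    (hH : ∀ᶠ d in atTop, IsPosRoot s d (H d)) : Tendsto H atTop (𝓝 ((s - 1) / s)) := by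
  have error_tendsto : Tendsto (fun d : ℕ => s⁻¹ ^ (d + 1)) atTop (𝓝 0) :=
    (tendsto_pow_atTop_nhds_zero_of_lt_one (inv_nonneg.mpr (zero_le_one.trans hs.le))
      (inv_lt_one_of_one_lt₀ hs)).comp (tendsto_add_atTop_nat 1)
  have upper_tendsto : Tendsto (fun d : ℕ => (s - 1) / s + s⁻¹ ^ (d + 1)) atTop
      (𝓝 ((s - 1) / s)) := by
    simpa only [add_zero] using error_tendsto.const_add ((s - 1) / s)
  exact tendsto_of_tendsto_of_tendsto_of_le_of_le' tendsto_const_nhds upper_tendsto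
    (hH.mono fun _ hd => (hd.sub_one_div_self_lt hs).le)
    (hH.mono fun _ hd => hd.le_add_inv_pow hs)

end IsPosRoot

theorem H_d_s_properties_general {s : ℝ} (hs : 1 < s) :
    (∀ d : ℕ, ∃! x : ℝ, 0 < x ∧
      1 - x = x * ∑ k ∈ range d, (x / (s - 1)) ^ (k + 1)) ∧
    (∀ H : ℕ → ℝ,
      (∀ d : ℕ, 1 ≤ d → 0 < H d ∧
        1 - H d = H d * ∑ k ∈ range d, (H d / (s - 1)) ^ (k + 1)) →
      (∀ d : ℕ, 1 ≤ d → (s - 1) / s < H d ∧ H d < 1) ∧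
      (∀ d : ℕ, 1 ≤ d → H (d + 1) < H d) ∧
      Tendsto H atTop (𝓝 ((s - 1) / s))) := by
  refine ⟨existsUnique_isPosRoot hs, fun H hH => ?_⟩
  have root : ∀ d, 1 ≤ d → IsPosRoot s d (H d) := hH
  refine ⟨fun d hd => ⟨(root d hd).sub_one_div_self_lt hs, (root d hd).lt_one hs hd⟩,
    fun d hd => (root d hd).lt_of_degree_lt hs (root (d + 1) (by lia)) d.lt_succ_self, ?_⟩
  exact tendsto_of_eventually_isPosRoot hs ((eventually_ge_atTop 1).mono root)

/-- Properties of `H_{d,s}`: for integers `s ≥ 2` and `d ≥ 1`, the equation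
`1 - x = x · Σ_{k=1}^{d} (x/(s-1))^k` has a unique positive real root `H_{d,s}`;
moreover `(s-1)/s < H_{d,s} < 1`, the sequence `d ↦ H_{d,s}` is strictly decreasing,
and `H_{d,s} → (s-1)/s` as `d → ∞`. -/
theorem H_d_s_properties (s : ℕ) (hs : 2 ≤ s) :
    (∀ d : ℕ, 1 ≤ d → ∃! x : ℝ, 0 < x ∧
      1 - x = x * ∑ k ∈ Finset.range d, (x / ((s : ℝ) - 1)) ^ (k + 1)) ∧
    (∀ H : ℕ → ℝ,
      (∀ d : ℕ, 1 ≤ d → 0 < H d ∧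
        1 - H d = H d * ∑ k ∈ Finset.range d, (H d / ((s : ℝ) - 1)) ^ (k + 1)) →
      (∀ d : ℕ, 1 ≤ d → ((s : ℝ) - 1) / s < H d ∧ H d < 1) ∧
      (∀ d : ℕ, 1 ≤ d → H (d + 1) < H d) ∧
      Filter.Tendsto H Filter.atTop (nhds (((s : ℝ) - 1) / s))) := by
  have hs_one : 1 < (s : ℝ) := Nat.one_lt_cast.mpr hs
  exact (H_d_s_properties_general hs_one).imp_left fun unique_root d _ => unique_root d
end
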